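/- Let K, L be plane convex bodies, and let r(L,K) = sup{t ≥ 0 : x + tK ⊆ L for some x} and R(L,K) = inf{t ≥ 0 : x + tK ⊇ L for some x}. Then for every t ∈ [r(L,K), R(L,K)], vol(L) − 2t·V(L,K) + t²·vol(K) ≤ 0. -/

import Mathlib

open Real Set MeasureTheory
open scoped Pointwise

namespace BB

abbrev E2 := EuclideanSpace ℝ (Fin 2)

lemma one_dim (A B : Set ℝ) (hA : IsCompact A) (hB : IsCompact B) (hAn : A.Nonempty)
    (hBn : B.Nonempty) : volume A + volume B ≤ volume (A + B) := by
  obtain ⟨a, haA, ha⟩ := hA.exists_isGreatest hAn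
  obtain ⟨b, hbB, hb⟩ := hB.exists_isLeast hBn
  have h1 : volume ((b : ℝ) +ᵥ A) = volume A := measure_vadd _ _ _
  have h2 : volume ((a : ℝ) +ᵥ B) = volume B := measure_vadd _ _ _
  have hm : MeasurableSet ((a : ℝ) +ᵥ B) := (hB.vadd a).isClosed.measurableSet
  have h3 := measure_union_add_inter (μ := volume) ((b : ℝ) +ᵥ A) hm
  have h4 : ((b : ℝ) +ᵥ A) ∩ ((a : ℝ) +ᵥ B) ⊆ {a + b} := by
    rintro x ⟨⟨y, hy, rfl⟩, ⟨z, hz, hzx⟩⟩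
    have := ha hy
    have := hb hz
    simp only [vadd_eq_add, mem_singleton_iff] at *
    linarith
  have h5 : volume (((b : ℝ) +ᵥ A) ∩ ((a : ℝ) +ᵥ B)) = 0 :=
    measure_mono_null h4 (by simp)
  rw [h5, add_zero, h1, h2] at h3
  rw [← h3]
  apply measure_mono
  rintro x (⟨y, hy, rfl⟩ | ⟨y, hy, rfl⟩)
  · exact ⟨y, hy, b, hbB, by simp [add_comm]⟩
  · exact ⟨a, haA, y, hy, by simp⟩

lemma slice_prod (A B : Set (ℝ × ℝ)) (hA : IsCompact A) (hB : IsCompact B)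
    (h : Prod.fst '' A = Prod.fst '' B) :
    2 * volume A + 2 * volume B ≤ volume (A + B) := by
  have hAB := hA.add hB
  rw [Measure.volume_eq_prod, Measure.prod_apply hA.measurableSet,
    Measure.prod_apply hB.measurableSet, Measure.prod_apply hAB.measurableSet]
  have h2 : ∫⁻ x : ℝ, volume (Prod.mk x ⁻¹' (A + B)) =
      2 * ∫⁻ x : ℝ, volume (Prod.mk (2 * x) ⁻¹' (A + B)) := by
    have h0 : ∀ f : ℝ → ENNReal, ∫⁻ x, f x = ∫⁻ x, f x ∂(ENNReal.ofReal |(2 : ℝ)| •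
        Measure.map (fun x => 2 * x) volume) := by
      intro f; rw [Real.smul_map_volume_mul_left (two_ne_zero)]
    rw [h0, lintegral_smul_measure, (measurableEmbedding_mulLeft₀ (two_ne_zero' ℝ)).lintegral_map]
    simp
  rw [h2, ← mul_add, ← lintegral_add_left (measurable_measure_prodMk_left hA.measurableSet)]
  gcongr with x
  have key : ∀ S : Set (ℝ × ℝ), IsCompact S → IsCompact (Prod.mk x ⁻¹' S) := by
    intro S hS
    apply IsCompact.of_isClosed_subset (hS.image continuous_snd)
    · exact hS.isClosed.preimage (by fun_prop)
    · intro y hy; exact ⟨_, hy, rfl⟩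
  by_cases hx : x ∈ Prod.fst '' A
  · have hx' := hx
    rw [h] at hx'
    obtain ⟨⟨a, b⟩, hab, rfl⟩ := hx
    obtain ⟨⟨a', b'⟩, hab', h'⟩ := hx'
    simp only at h'
    subst h'
    refine (one_dim _ _ (key A hA) (key B hB) ⟨b, hab⟩ ⟨b', hab'⟩).trans (measure_mono ?_)
    rintro _ ⟨y, hy, z, hz, rfl⟩
    exact ⟨_, hy, _, hz, by simp [two_mul]⟩
  · have hx' := hx
    rw [h] at hx'
    have e1 : Prod.mk x ⁻¹' A = ∅ := by
      ext y; simp only [mem_preimage, mem_empty_iff_false, iff_false]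
      exact fun hy => hx ⟨_, hy, rfl⟩
    have e2 : Prod.mk x ⁻¹' B = ∅ := by
      ext y; simp only [mem_preimage, mem_empty_iff_false, iff_false]
      exact fun hy => hx' ⟨_, hy, rfl⟩
    simp [e1, e2]

/-- rotation-type coordinates adapted to the functional `a x₀ + b x₁` -/
noncomputable def coordL (a b : ℝ) (h : a ^ 2 + b ^ 2 ≠ 0) : E2 ≃ₗ[ℝ] (ℝ × ℝ) where
  toFun x := (a * x 0 + b * x 1, -b * x 0 + a * x 1)
  invFun y := !₂[(a * y.1 - b * y.2) / (a ^ 2 + b ^ 2), (b * y.1 + a * y.2) / (a ^ 2 + b ^ 2)]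
  map_add' x y := by ext <;> simp <;> ring
  map_smul' c x := by ext <;> simp <;> ring
  left_inv x := by
    ext i; fin_cases i <;> simp <;> field_simp <;> ring
  right_inv y := by
    ext <;> simp <;> field_simp <;> ring

lemma coord_meas (a b : ℝ) (h : a ^ 2 + b ^ 2 ≠ 0) :
    ∃ c : ENNReal, c ≠ 0 ∧ c ≠ ⊤ ∧ ∀ S : Set E2,
      volume S = c * volume (coordL a b h '' S) := by
  let e := (coordL a b h).toContinuousLinearEquiv
  have h1 : (Measure.map e.symm (volume : Measure (ℝ × ℝ))).IsAddHaarMeasure :=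
    e.symm.isAddHaarMeasure_map _
  have h2 := Measure.isAddLeftInvariant_eq_smul (volume : Measure E2)
    (Measure.map e.symm (volume : Measure (ℝ × ℝ)))
  set c := Measure.addHaarScalarFactor (volume : Measure E2)
    (Measure.map e.symm (volume : Measure (ℝ × ℝ))) with hc
  have hcpos : c ≠ 0 := (Measure.addHaarScalarFactor_pos_of_isAddHaarMeasure _ _).ne'
  refine ⟨c, by simpa using hcpos, by simp, fun S => ?_⟩
  conv_lhs => rw [h2]
  rw [Measure.smul_apply, show Measure.map (e.symm : ℝ × ℝ → E2) volume S = _ from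
    e.symm.toHomeomorph.measurableEmbedding.map_apply _ _]
  have : (e.symm.toHomeomorph : (ℝ × ℝ) → E2) ⁻¹' S = coordL a b h '' S := by
    rw [show (coordL a b h : E2 → ℝ × ℝ) = e from rfl]
    exact (e.image_eq_preimage_symm S).symm
  rw [this]; rfl

lemma slice (a b : ℝ) (h : a ^ 2 + b ^ 2 ≠ 0) (A B : Set E2) (hA : IsCompact A) (hB : IsCompact B)
    (hAB : (fun x : E2 => a * x 0 + b * x 1) '' A = (fun x : E2 => a * x 0 + b * x 1) '' B) :
    2 * volume A + 2 * volume B ≤ volume (A + B) := by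
  obtain ⟨c, hc0, hct, hc⟩ := coord_meas a b h
  have hcont : Continuous (coordL a b h) := (coordL a b h).toContinuousLinearEquiv.continuous
  rw [hc A, hc B, hc (A + B), image_add]
  have := slice_prod _ _ (hA.image hcont) (hB.image hcont) (by
    rw [image_image, image_image]; exact hAB)
  calc _ = c * (2 * volume (coordL a b h '' A) + 2 * volume (coordL a b h '' B)) := by ring
    _ ≤ _ := by gcongr

lemma line_null (a b : ℝ) (h : a ^ 2 + b ^ 2 ≠ 0) (c : ℝ) :
    volume {x : E2 | a * x 0 + b * x 1 = c} = 0 := by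
  obtain ⟨k, hc0, hct, hc⟩ := coord_meas a b h
  rw [hc]
  have : volume (coordL a b h '' {x : E2 | a * x 0 + b * x 1 = c}) = 0 := by
    refine measure_mono_null (t := {c} ×ˢ univ) ?_ ?_
    · rintro _ ⟨x, hx, rfl⟩
      exact ⟨hx, trivial⟩
    · rw [Measure.volume_eq_prod, Measure.prod_prod]; simp
  simp [this]

lemma meas_lin (a b : ℝ) : Continuous (fun x : E2 => a * x 0 + b * x 1) := by fun_prop

lemma cut (a b c : ℝ) (h : a ^ 2 + b ^ 2 ≠ 0) (A B : Set E2) (hA : IsCompact A) (hB : IsCompact B)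
    (h1 : 2 * volume (A ∩ {x : E2 | a * x 0 + b * x 1 ≤ c}) +
        2 * volume (B ∩ {x : E2 | a * x 0 + b * x 1 ≤ c}) ≤
        volume (A ∩ {x : E2 | a * x 0 + b * x 1 ≤ c} + B ∩ {x : E2 | a * x 0 + b * x 1 ≤ c}))
    (h2 : 2 * volume (A ∩ {x : E2 | c ≤ a * x 0 + b * x 1}) +
        2 * volume (B ∩ {x : E2 | c ≤ a * x 0 + b * x 1}) ≤
        volume (A ∩ {x : E2 | c ≤ a * x 0 + b * x 1} + B ∩ {x : E2 | c ≤ a * x 0 + b * x 1})) :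
    2 * volume A + 2 * volume B ≤ volume (A + B) := by
  set P := {x : E2 | a * x 0 + b * x 1 ≤ c} with hP
  set Q := {x : E2 | c ≤ a * x 0 + b * x 1} with hQ
  have cP : IsClosed P := isClosed_le (meas_lin a b) continuous_const
  have cQ : IsClosed Q := isClosed_le continuous_const (meas_lin a b)
  have hs : ∀ S : Set E2, volume S ≤ volume (S ∩ P) + volume (S ∩ Q) := by
    intro S
    refine (measure_mono ?_).trans (measure_union_le _ _)
    intro x hx
    rcases le_total (a * x 0 + b * x 1) c with h | h
    · exact Or.inl ⟨hx, h⟩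
    · exact Or.inr ⟨hx, h⟩
  have hu := measure_union_add_inter (μ := volume) (A ∩ P + B ∩ P)
    (t := A ∩ Q + B ∩ Q) ((hA.inter_right cQ).add (hB.inter_right cQ)).measurableSet
  have hz : volume ((A ∩ P + B ∩ P) ∩ (A ∩ Q + B ∩ Q)) = 0 := by
    refine measure_mono_null ?_ (line_null a b h (2 * c))
    rintro _ ⟨⟨x, hx, y, hy, rfl⟩, ⟨x', hx', y', hy', he⟩⟩
    have e0 : x' 0 + y' 0 = x 0 + y 0 := congrArg (fun z : E2 => z 0) he
    have e1 : x' 1 + y' 1 = x 1 + y 1 := congrArg (fun z : E2 => z 1) he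
    have i1 := hx.2
    have i2 := hy.2
    have i3 := hx'.2
    have i4 := hy'.2
    simp only [hP, hQ, mem_ofPred_eq, PiLp.add_apply] at *
    have : a * (x 0 + y 0) + b * (x 1 + y 1) = a * x' 0 + b * x' 1 + (a * y' 0 + b * y' 1) := by
      rw [← e0, ← e1]; ring
    apply le_antisymm <;> nlinarith
  rw [hz, add_zero] at hu
  calc 2 * volume A + 2 * volume B
      ≤ 2 * (volume (A ∩ P) + volume (A ∩ Q)) + 2 * (volume (B ∩ P) + volume (B ∩ Q)) := by
        gcongr <;> apply hs
    _ = (2 * volume (A ∩ P) + 2 * volume (B ∩ P)) + (2 * volume (A ∩ Q) + 2 * volume (B ∩ Q)) := by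
        ring
    _ ≤ _ := add_le_add h1 h2
    _ = _ := hu.symm
    _ ≤ _ := measure_mono (union_subset (add_subset_add inter_subset_left inter_subset_left)
        (add_subset_add inter_subset_left inter_subset_left))

/-- `B ⊆ A` sharing the same extent in direction `(a,b)` -/
lemma slice' (a b : ℝ) (h : a ^ 2 + b ^ 2 ≠ 0) (A B : Set E2) (hA : IsCompact A) (hB : IsCompact B)
    (hBA : B ⊆ A) (hBv : Convex ℝ B) (p q : E2) (hp : p ∈ B) (hq : q ∈ B)
    (h1 : ∀ x ∈ A, a * p 0 + b * p 1 ≤ a * x 0 + b * x 1)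
    (h2 : ∀ x ∈ A, a * x 0 + b * x 1 ≤ a * q 0 + b * q 1) :
    2 * volume A + 2 * volume B ≤ volume (A + B) := by
  apply slice a b h A B hA hB
  apply Subset.antisymm _ (image_mono hBA)
  rintro _ ⟨x, hx, rfl⟩
  have := hBv.isPreconnected.intermediate_value hp hq (meas_lin a b).continuousOn
  exact this ⟨h1 x hx, h2 x hx⟩

lemma good_self (A : Set E2) (hA : Convex ℝ A) :
    2 * volume A + 2 * volume A ≤ volume (A + A) := by
  have : A + A = (2 : ℝ) • A := by
    have := hA.add_smul (p := 1) (q := 1) zero_le_one zero_le_one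
    norm_num at this
    exact this.symm
  rw [this, Measure.addHaar_smul]
  simp only [finrank_euclideanSpace, Fintype.card_fin]
  norm_num
  rw [← add_mul]; norm_num

lemma cap (u v p q : E2) (A B : Set E2) (hA : IsCompact A) (hB : IsCompact B)
    (hBA : B ⊆ A) (hBv : Convex ℝ B) (hp : p ∈ B) (hq : q ∈ B) (hpq : p ≠ q)
    (hw : 0 < u 0 * v 1 - u 1 * v 0)
    (hu : ∀ x ∈ A, u 0 * x 0 + u 1 * x 1 ≤ u 0 * p 0 + u 1 * p 1)
    (hv : ∀ x ∈ A, v 0 * x 0 + v 1 * x 1 ≤ v 0 * q 0 + v 1 * q 1)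
    (C : Set E2)
    (hC : C = {x : E2 | (q 1 - p 1) * p 0 + (-(q 0 - p 0)) * p 1 ≤
      (q 1 - p 1) * x 0 + (-(q 0 - p 0)) * x 1}) :
    2 * volume (A ∩ C) + 2 * volume (B ∩ C) ≤ volume (A ∩ C + B ∩ C) := by
  have cC : IsClosed C := by rw [hC]; exact isClosed_le continuous_const (meas_lin _ _)
  have vC : Convex ℝ C := by
    rw [hC]
    intro x hx y hy s t hs ht hst
    simp only [mem_ofPred_eq, PiLp.add_apply, PiLp.smul_apply, smul_eq_mul] at *
    obtain rfl : t = 1 - s := by linarith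
    nlinarith [mul_le_mul_of_nonneg_left hx hs, mul_le_mul_of_nonneg_left hy ht]
  have hpC : p ∈ C := by rw [hC]; simp
  have hqC : q ∈ C := by
    rw [hC]; simp only [mem_ofPred_eq]; nlinarith
  obtain ⟨d0, hd0⟩ : ∃ d, d = q 0 - p 0 := ⟨_, rfl⟩
  obtain ⟨d1, hd1⟩ : ∃ d, d = q 1 - p 1 := ⟨_, rfl⟩
  obtain ⟨α, hα⟩ : ∃ d, d = v 0 * d0 + v 1 * d1 := ⟨_, rfl⟩
  obtain ⟨γ, hγ⟩ : ∃ d, d = -(u 0 * d0 + u 1 * d1) := ⟨_, rfl⟩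
  have hα0 : 0 ≤ α := by
    have := hv p (hBA hp); rw [hα, hd0, hd1]; nlinarith
  have hγ0 : 0 ≤ γ := by
    have := hu q (hBA hq); rw [hγ, hd0, hd1]; nlinarith
  have hne : (-α * u 0 + γ * v 0) ^ 2 + (-α * u 1 + γ * v 1) ^ 2 ≠ 0 := by
    intro h0
    have e0 : -α * u 0 + γ * v 0 = 0 := by nlinarith
    have e1 : -α * u 1 + γ * v 1 = 0 := by nlinarith
    have a0 : α = 0 := by
      have : α * (u 0 * v 1 - u 1 * v 0) = 0 := by linear_combination -v 1 * e0 + v 0 * e1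
      rcases mul_eq_zero.1 this with h | h
      · exact h
      · linarith
    have g0 : γ = 0 := by
      have : γ * (u 0 * v 1 - u 1 * v 0) = 0 := by linear_combination -u 1 * e0 + u 0 * e1
      rcases mul_eq_zero.1 this with h | h
      · exact h
      · linarith
    rw [a0] at hα
    rw [g0] at hγ
    have d00 : d0 * (u 0 * v 1 - u 1 * v 0) = 0 := by linear_combination v 1 * hγ + u 1 * hα
    have d10 : d1 * (u 0 * v 1 - u 1 * v 0) = 0 := by linear_combination -v 0 * hγ - u 0 * hα
    have d00' := (mul_eq_zero.1 d00).resolve_right hw.ne'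
    have d10' := (mul_eq_zero.1 d10).resolve_right hw.ne'
    apply hpq
    ext i; fin_cases i
    · simp; linarith
    · simp; linarith
  have hψ : ∀ x ∈ C, α * (u 0 * p 0 + u 1 * p 1) + γ * (v 0 * p 0 + v 1 * p 1) ≤
      α * (u 0 * x 0 + u 1 * x 1) + γ * (v 0 * x 0 + v 1 * x 1) := by
    intro x hx
    rw [hC] at hx
    simp only [mem_ofPred_eq] at hx
    rw [← hd0, ← hd1] at hx
    have h1 : 0 ≤ d1 * (x 0 - p 0) - d0 * (x 1 - p 1) := by linarith
    have h2 := mul_nonneg hw.le h1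
    rw [hα, hγ]
    nlinarith
  have hψpq : α * (u 0 * q 0 + u 1 * q 1) + γ * (v 0 * q 0 + v 1 * q 1) =
      α * (u 0 * p 0 + u 1 * p 1) + γ * (v 0 * p 0 + v 1 * p 1) := by
    rw [hα, hγ, hd0, hd1]; ring
  apply slice' _ _ hne _ _ (hA.inter_right cC) (hB.inter_right cC)
    (inter_subset_inter_left _ hBA) (hBv.inter vC) p q ⟨hp, hpC⟩ ⟨hq, hqC⟩
  · intro x hx
    have h1 := hψ x hx.2
    have h2 := mul_le_mul_of_nonneg_left (hu x hx.1) hα0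
    linarith
  · intro x hx
    have h1 := hψ x hx.2
    have h2 := mul_le_mul_of_nonneg_left (hv x hx.1) hγ0
    linarith

lemma step (u v p q : E2) (A B : Set E2) (hA : IsCompact A) (hB : IsCompact B)
    (hBA : B ⊆ A) (hBv : Convex ℝ B) (hp : p ∈ B) (hq : q ∈ B)
    (hw : 0 < u 0 * v 1 - u 1 * v 0)
    (hu : ∀ x ∈ A, u 0 * x 0 + u 1 * x 1 ≤ u 0 * p 0 + u 1 * p 1)
    (hv : ∀ x ∈ A, v 0 * x 0 + v 1 * x 1 ≤ v 0 * q 0 + v 1 * q 1)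
    (C : Set E2)
    (hC : C = {x : E2 | (q 1 - p 1) * x 0 + (-(q 0 - p 0)) * x 1 ≤
      (q 1 - p 1) * p 0 + (-(q 0 - p 0)) * p 1})
    (hgood : 2 * volume (A ∩ C) + 2 * volume (B ∩ C) ≤ volume (A ∩ C + B ∩ C)) :
    2 * volume A + 2 * volume B ≤ volume (A + B) := by
  by_cases hpq : p = q
  · have : C = univ := by
      rw [hC, hpq]; ext x; simp
    simpa [this] using hgood
  · have hne : (q 1 - p 1) ^ 2 + (-(q 0 - p 0)) ^ 2 ≠ 0 := by
      intro h0
      have e0 : q 1 - p 1 = 0 := by nlinarith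
      have e1 : q 0 - p 0 = 0 := by nlinarith
      apply hpq
      ext i; fin_cases i
      · simp; linarith
      · simp; linarith
    subst hC
    exact cut _ _ _ hne A B hA hB hgood
      (cap u v p q A B hA hB hBA hBv hp hq hpq hw hu hv _ rfl)

lemma half_props (a b c : ℝ) : IsClosed {x : E2 | a * x 0 + b * x 1 ≤ c} ∧
    Convex ℝ {x : E2 | a * x 0 + b * x 1 ≤ c} := by
  refine ⟨isClosed_le (meas_lin _ _) continuous_const, ?_⟩
  intro x hx y hy s t hs ht hst
  simp only [mem_ofPred_eq, PiLp.add_apply, PiLp.smul_apply, smul_eq_mul] at *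
  obtain rfl : t = 1 - s := by linarith
  nlinarith [mul_le_mul_of_nonneg_left hx hs, mul_le_mul_of_nonneg_left hy ht]

lemma good_null (A B : Set E2) (hBA : B ⊆ A) (h : volume A = 0) :
    2 * volume A + 2 * volume B ≤ volume (A + B) := by
  rw [h, measure_mono_null hBA h]; simp

lemma line_null' (p q : E2) (hpq : p ≠ q) :
    volume {x : E2 | (q 1 - p 1) * x 0 + (-(q 0 - p 0)) * x 1 =
      (q 1 - p 1) * p 0 + (-(q 0 - p 0)) * p 1} = 0 := by
  apply line_null
  intro h0
  have e0 : q 1 - p 1 = 0 := by nlinarith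
  have e1 : q 0 - p 0 = 0 := by nlinarith
  apply hpq
  ext i; fin_cases i
  · simp; linarith
  · simp; linarith

lemma tri (u v w p q r : E2) (A B : Set E2) (hA : IsCompact A) (hB : IsCompact B)
    (hBA : B ⊆ A) (hBv : Convex ℝ B) (hp : p ∈ B) (hq : q ∈ B) (hr : r ∈ B)
    (huv : 0 < u 0 * v 1 - u 1 * v 0)
    (hvw : 0 < v 0 * w 1 - v 1 * w 0)
    (hwu : 0 < w 0 * u 1 - w 1 * u 0)
    (hu : ∀ x ∈ A, u 0 * x 0 + u 1 * x 1 ≤ u 0 * p 0 + u 1 * p 1)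
    (hv : ∀ x ∈ A, v 0 * x 0 + v 1 * x 1 ≤ v 0 * q 0 + v 1 * q 1)
    (hw : ∀ x ∈ A, w 0 * x 0 + w 1 * x 1 ≤ w 0 * r 0 + w 1 * r 1) :
    2 * volume A + 2 * volume B ≤ volume (A + B) := by
  obtain ⟨a, ha⟩ : ∃ d, d = v 0 * w 1 - v 1 * w 0 := ⟨_, rfl⟩
  obtain ⟨b, hb⟩ : ∃ d, d = w 0 * u 1 - w 1 * u 0 := ⟨_, rfl⟩
  obtain ⟨c, hc⟩ : ∃ d, d = u 0 * v 1 - u 1 * v 0 := ⟨_, rfl⟩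
  have rel0 : a * u 0 + b * v 0 + c * w 0 = 0 := by rw [ha, hb, hc]; ring
  have rel1 : a * u 1 + b * v 1 + c * w 1 = 0 := by rw [ha, hb, hc]; ring
  have ha0 : 0 < a := ha ▸ hvw
  have hb0 : 0 < b := hb ▸ hwu
  have hc0 : 0 < c := hc ▸ huv
  -- orientation of the contact triangle
  have hΔ : 0 ≤ (q 0 - p 0) * (r 1 - p 1) - (q 1 - p 1) * (r 0 - p 0) := by
    obtain ⟨s12, h12⟩ : ∃ d, d = u 0 * (p 0 - q 0) + u 1 * (p 1 - q 1) := ⟨_, rfl⟩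
    obtain ⟨s13, h13⟩ : ∃ d, d = u 0 * (p 0 - r 0) + u 1 * (p 1 - r 1) := ⟨_, rfl⟩
    obtain ⟨s21, h21⟩ : ∃ d, d = v 0 * (q 0 - p 0) + v 1 * (q 1 - p 1) := ⟨_, rfl⟩
    obtain ⟨s23, h23⟩ : ∃ d, d = v 0 * (q 0 - r 0) + v 1 * (q 1 - r 1) := ⟨_, rfl⟩
    have p12 : 0 ≤ s12 := by have := hu q (hBA hq); rw [h12]; linarith
    have p13 : 0 ≤ s13 := by have := hu r (hBA hr); rw [h13]; linarith
    have p21 : 0 ≤ s21 := by have := hv p (hBA hp); rw [h21]; linarith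
    have p23 : 0 ≤ s23 := by have := hv r (hBA hr); rw [h23]; linarith
    have p31 : b * (s21 - s23) ≤ a * s13 := by
      have h1 := mul_le_mul_of_nonneg_left (hw p (hBA hp)) hc0.le
      have : a * s13 - b * (s21 - s23) = c * (w 0 * r 0 + w 1 * r 1) - c * (w 0 * p 0 + w 1 * p 1) := by
        rw [h13, h21, h23]; linear_combination (p 0 - r 0) * rel0 + (p 1 - r 1) * rel1
      linarith
    have p32 : a * (s12 - s13) ≤ b * s23 := by
      have h1 := mul_le_mul_of_nonneg_left (hw q (hBA hq)) hc0.le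
      have : b * s23 - a * (s12 - s13) = c * (w 0 * r 0 + w 1 * r 1) - c * (w 0 * q 0 + w 1 * q 1) := by
        rw [h13, h12, h23]; linear_combination (q 0 - r 0) * rel0 + (q 1 - r 1) * rel1
      linarith
    have key : s12 * (s21 - s23) ≤ s13 * s21 := by
      rcases le_total s12 s13 with h | h
      · nlinarith [mul_le_mul_of_nonneg_right h p21, mul_nonneg p12 p23]
      · have k1 := mul_le_mul_of_nonneg_right p31 (sub_nonneg.2 h)
        have k2 := mul_le_mul_of_nonneg_left p32 p13
        have : b * (s12 * (s21 - s23)) ≤ b * (s13 * s21) := by nlinarith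
        exact le_of_mul_le_mul_left this hb0
    have e : c * ((q 0 - p 0) * (r 1 - p 1) - (q 1 - p 1) * (r 0 - p 0)) =
        s13 * s21 - s12 * (s21 - s23) := by
      rw [h12, h13, h21, h23, hc]; ring
    by_contra hneg
    push Not at hneg
    have := mul_neg_of_pos_of_neg hc0 hneg
    linarith
  obtain ⟨C1, hC1⟩ : ∃ C : Set E2, C = {x : E2 | (q 1 - p 1) * x 0 + (-(q 0 - p 0)) * x 1 ≤
      (q 1 - p 1) * p 0 + (-(q 0 - p 0)) * p 1} := ⟨_, rfl⟩
  obtain ⟨C2, hC2⟩ : ∃ C : Set E2, C = {x : E2 | (r 1 - q 1) * x 0 + (-(r 0 - q 0)) * x 1 ≤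
      (r 1 - q 1) * q 0 + (-(r 0 - q 0)) * q 1} := ⟨_, rfl⟩
  obtain ⟨C3, hC3⟩ : ∃ C : Set E2, C = {x : E2 | (p 1 - r 1) * x 0 + (-(p 0 - r 0)) * x 1 ≤
      (p 1 - r 1) * r 0 + (-(p 0 - r 0)) * r 1} := ⟨_, rfl⟩
  have c1 : IsClosed C1 ∧ Convex ℝ C1 := hC1 ▸ half_props _ _ _
  have c2 : IsClosed C2 ∧ Convex ℝ C2 := hC2 ▸ half_props _ _ _
  have c3 : IsClosed C3 ∧ Convex ℝ C3 := hC3 ▸ half_props _ _ _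
  have p1 : p ∈ C1 := by rw [hC1]; simp
  have q1 : q ∈ C1 := by rw [hC1]; simp only [mem_ofPred_eq]; nlinarith
  have r1 : r ∈ C1 := by rw [hC1]; simp only [mem_ofPred_eq]; nlinarith
  have p2 : p ∈ C2 := by rw [hC2]; simp only [mem_ofPred_eq]; nlinarith
  have q2 : q ∈ C2 := by rw [hC2]; simp
  have r2 : r ∈ C2 := by rw [hC2]; simp only [mem_ofPred_eq]; nlinarith
  have p3 : p ∈ C3 := by rw [hC3]; simp only [mem_ofPred_eq]; nlinarith
  have q3 : q ∈ C3 := by rw [hC3]; simp only [mem_ofPred_eq]; nlinarith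
  have r3 : r ∈ C3 := by rw [hC3]; simp
  apply step u v p q A B hA hB hBA hBv hp hq huv hu hv C1 hC1
  apply step v w q r (A ∩ C1) (B ∩ C1) (hA.inter_right c1.1) (hB.inter_right c1.1)
    (inter_subset_inter_left _ hBA) (hBv.inter c1.2) ⟨hq, q1⟩ ⟨hr, r1⟩ hvw
    (fun x hx => hv x hx.1) (fun x hx => hw x hx.1) C2 hC2
  apply step w u r p (A ∩ C1 ∩ C2) (B ∩ C1 ∩ C2) ((hA.inter_right c1.1).inter_right c2.1)
    ((hB.inter_right c1.1).inter_right c2.1)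
    (inter_subset_inter_left _ (inter_subset_inter_left _ hBA)) ((hBv.inter c1.2).inter c2.2)
    ⟨⟨hr, r1⟩, r2⟩ ⟨⟨hp, p1⟩, p2⟩ hwu
    (fun x hx => hw x hx.1.1) (fun x hx => hu x hx.1.1) C3 hC3
  have hsub : B ∩ C1 ∩ C2 ∩ C3 ⊆ A ∩ C1 ∩ C2 ∩ C3 :=
    inter_subset_inter_left _ (inter_subset_inter_left _ (inter_subset_inter_left _ hBA))
  rcases hΔ.lt_or_eq with hpos | hzero
  · have heq : A ∩ C1 ∩ C2 ∩ C3 = B ∩ C1 ∩ C2 ∩ C3 := by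
      apply Subset.antisymm _ hsub
      rintro x ⟨⟨⟨hxA, x1⟩, x2⟩, x3⟩
      refine ⟨⟨⟨?_, x1⟩, x2⟩, x3⟩
      rw [hC1] at x1
      rw [hC2] at x2
      rw [hC3] at x3
      simp only [mem_ofPred_eq] at x1 x2 x3
      obtain ⟨D, hD⟩ : ∃ D, D = (q 0 - p 0) * (r 1 - p 1) - (q 1 - p 1) * (r 0 - p 0) := ⟨_, rfl⟩
      rw [← hD] at hpos
      obtain ⟨b3, hb3⟩ : ∃ t, t = (q 0 - p 0) * (x 1 - p 1) - (q 1 - p 1) * (x 0 - p 0) := ⟨_, rfl⟩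
      obtain ⟨b1, hb1⟩ : ∃ t, t = (r 0 - q 0) * (x 1 - q 1) - (r 1 - q 1) * (x 0 - q 0) := ⟨_, rfl⟩
      obtain ⟨b2, hb2⟩ : ∃ t, t = (p 0 - r 0) * (x 1 - r 1) - (p 1 - r 1) * (x 0 - r 0) := ⟨_, rfl⟩
      have hsum : b1 + b2 + b3 = D := by rw [hb1, hb2, hb3, hD]; ring
      have n1 : 0 ≤ b1 := by rw [hb1]; linarith
      have n2 : 0 ≤ b2 := by rw [hb2]; linarith
      have n3 : 0 ≤ b3 := by rw [hb3]; linarith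
      have hx : x = (b1 / D) • p + (b2 / D) • q + (b3 / D) • r := by
        have e0 : D * x 0 = b1 * p 0 + b2 * q 0 + b3 * r 0 := by
          rw [hb1, hb2, hb3, hD]; ring
        have e1 : D * x 1 = b1 * p 1 + b2 * q 1 + b3 * r 1 := by
          rw [hb1, hb2, hb3, hD]; ring
        ext i; fin_cases i
        · simp; field_simp; linarith
        · simp; field_simp; linarith
      rw [hx]
      have := hBv.sum_mem (t := Finset.univ) (w := ![b1 / D, b2 / D, b3 / D]) (z := ![p, q, r])
        (by intro i _; fin_cases i <;> simp <;> positivity)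
        (by simp [Fin.sum_univ_three]; field_simp; linarith)
        (by intro i _; fin_cases i <;> simp <;> assumption)
      simpa [Fin.sum_univ_three] using this
    rw [heq]
    exact good_self _ (((hBv.inter c1.2).inter c2.2).inter c3.2)
  · apply good_null _ _ hsub
    by_cases hpq : p = q
    · by_cases hqr : q = r
      · refine measure_mono_null ?_ (line_null 1 0 (by norm_num) (p 0))
        rintro x ⟨⟨⟨hxA, x1⟩, x2⟩, x3⟩
        have i1 := hu x hxA
        have i2 := hv x hxA
        have i3 := hw x hxA
        rw [← hqr, ← hpq] at i3
        rw [← hpq] at i2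
        have j1 : u 0 * (x 0 - p 0) + u 1 * (x 1 - p 1) ≤ 0 := by linarith
        have j2 : v 0 * (x 0 - p 0) + v 1 * (x 1 - p 1) ≤ 0 := by linarith
        have j3 : w 0 * (x 0 - p 0) + w 1 * (x 1 - p 1) ≤ 0 := by linarith
        have hs : a * (u 0 * (x 0 - p 0) + u 1 * (x 1 - p 1)) +
            b * (v 0 * (x 0 - p 0) + v 1 * (x 1 - p 1)) +
            c * (w 0 * (x 0 - p 0) + w 1 * (x 1 - p 1)) = 0 := by
          linear_combination (x 0 - p 0) * rel0 + (x 1 - p 1) * rel1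
        have m1 := mul_nonpos_of_nonneg_of_nonpos ha0.le j1
        have m2 := mul_nonpos_of_nonneg_of_nonpos hb0.le j2
        have m3 := mul_nonpos_of_nonneg_of_nonpos hc0.le j3
        have k1 := (mul_eq_zero.1 (le_antisymm m1 (by linarith))).resolve_left ha0.ne'
        have k2 := (mul_eq_zero.1 (le_antisymm m2 (by linarith))).resolve_left hb0.ne'
        have : c * (x 0 - p 0) = 0 := by rw [hc]; linear_combination v 1 * k1 - u 1 * k2
        have := (mul_eq_zero.1 this).resolve_left hc0.ne'
        simp only [mem_ofPred_eq]; linarith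
      · refine measure_mono_null ?_ (line_null' q r hqr)
        rintro x ⟨⟨⟨hxA, x1⟩, x2⟩, x3⟩
        rw [hC1] at x1
        rw [hC2] at x2
        rw [hC3] at x3
        simp only [mem_ofPred_eq] at x1 x2 x3 ⊢
        apply le_antisymm x2
        nlinarith
    · refine measure_mono_null ?_ (line_null' p q hpq)
      rintro x ⟨⟨⟨hxA, x1⟩, x2⟩, x3⟩
      rw [hC1] at x1
      rw [hC2] at x2
      rw [hC3] at x3
      simp only [mem_ofPred_eq] at x1 x2 x3 ⊢
      apply le_antisymm x1
      nlinarith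

lemma hull_three (N : Set E2) {x : E2} (hx : x ∈ convexHull ℝ N) :
    ∃ (w : Fin 3 → ℝ) (z : Fin 3 → E2), w ∈ stdSimplex ℝ (Fin 3) ∧ (∀ i, z i ∈ N) ∧
      ∑ i, w i • z i = x := by
  have hne : N.Nonempty := convexHull_nonempty_iff.1 ⟨x, hx⟩
  obtain ⟨n0, hn0⟩ := hne
  obtain ⟨ι, _, z, w, hz, haf, hw, hw1, hwz⟩ := eq_pos_convex_span_of_mem_convexHull hx
  have hcard : Fintype.card ι ≤ Fintype.card (Fin 3) := by
    have h1 := haf.card_le_finrank_succ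
    have h2 := Submodule.finrank_le (vectorSpan ℝ (range z))
    simp only [finrank_euclideanSpace, Fintype.card_fin] at h2
    simp only [Fintype.card_fin]
    omega
  obtain ⟨e⟩ := Function.Embedding.nonempty_of_card_le hcard
  have hw' : ∀ i, Function.extend e w 0 (e i) = w i := fun i => e.injective.extend_apply _ _ _
  have hz' : ∀ i, Function.extend e z (fun _ => n0) (e i) = z i :=
    fun i => e.injective.extend_apply _ _ _
  have h0 : ∀ j, j ∉ e '' (univ : Set ι) → Function.extend e w 0 j = 0 := by
    intro j hj
    rw [Function.extend_apply']
    · rfl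
    · rintro ⟨a, ha⟩; exact hj ⟨a, trivial, ha⟩
  refine ⟨Function.extend e w 0, Function.extend e z (fun _ => n0), ⟨?_, ?_⟩, ?_, ?_⟩
  · intro j
    by_cases hj : ∃ i, e i = j
    · obtain ⟨i, rfl⟩ := hj
      rw [hw']; exact (hw i).le
    · rw [h0 j (by rintro ⟨a, _, ha⟩; exact hj ⟨a, ha⟩)]
  · rw [← hw1]
    symm
    apply Finset.sum_of_injOn e e.injective.injOn (by simp)
    · intro j _ hj; exact h0 j (by simpa using hj)
    · intro i _; exact (hw' i).symm
  · intro j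
    by_cases hj : ∃ i, e i = j
    · obtain ⟨i, rfl⟩ := hj
      rw [hz']; exact hz ⟨i, rfl⟩
    · rw [Function.extend_apply' _ _ _ hj]; exact hn0
  · rw [← hwz]
    symm
    apply Finset.sum_of_injOn e e.injective.injOn (by simp)
    · intro j _ hj; rw [h0 j (by simpa using hj), zero_smul]
    · intro i _; rw [hw', hz']

lemma hull_compact (N : Set E2) (hN : IsCompact N) : IsCompact (convexHull ℝ N) := by
  have h : convexHull ℝ N = (fun wz : (Fin 3 → ℝ) × (Fin 3 → E2) => ∑ i, wz.1 i • wz.2 i) ''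
      (stdSimplex ℝ (Fin 3) ×ˢ (univ.pi fun _ => N)) := by
    ext x
    constructor
    · intro hx
      obtain ⟨w, z, hw, hz, h⟩ := hull_three N hx
      exact ⟨(w, z), ⟨hw, fun i _ => hz i⟩, h⟩
    · rintro ⟨⟨w, z⟩, ⟨hw, hz⟩, rfl⟩
      exact (convex_convexHull ℝ N).sum_mem (fun i _ => hw.1 i) hw.2
        (fun i _ => subset_convexHull ℝ N (hz i trivial))
  rw [h]
  apply ((isCompact_stdSimplex ℝ (Fin 3)).prod (isCompact_univ_pi fun _ => hN)).image
  fun_prop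

lemma sphere_iff (u : E2) : u ∈ Metric.sphere (0 : E2) 1 ↔ u 0 ^ 2 + u 1 ^ 2 = 1 := by
  rw [mem_sphere_zero_iff_norm, EuclideanSpace.norm_eq]
  simp [Fin.sum_univ_two]

lemma functional (f : E2 →L[ℝ] ℝ) : ∃ u : E2, ∀ x, f x = u 0 * x 0 + u 1 * x 1 := by
  refine ⟨!₂[f !₂[1, 0], f !₂[0, 1]], fun x => ?_⟩
  have : x = x 0 • (!₂[1, 0] : E2) + x 1 • (!₂[0, 1] : E2) := by
    ext i; fin_cases i <;> simp
  conv_lhs => rw [this]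
  simp only [map_add, map_smul, smul_eq_mul]
  simp [mul_comm]

lemma sep (A : Set E2) (hA : IsCompact A) (hAv : Convex ℝ A) (hAn : A.Nonempty) (y : E2)
    (hy : y ∉ A) : ∃ u ∈ Metric.sphere (0 : E2) 1, ∀ x ∈ A,
      u 0 * x 0 + u 1 * x 1 < u 0 * y 0 + u 1 * y 1 := by
  obtain ⟨f, c, h1, h2⟩ := geometric_hahn_banach_closed_point hAv hA.isClosed hy
  obtain ⟨v, hv⟩ := functional f
  have hlt : ∀ x ∈ A, v 0 * x 0 + v 1 * x 1 < v 0 * y 0 + v 1 * y 1 := by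
    intro x hx; rw [← hv, ← hv]; exact (h1 x hx).trans h2
  have hv0 : v ≠ 0 := by
    rintro rfl
    obtain ⟨a, ha⟩ := hAn
    simpa using hlt a ha
  have hn : 0 < ‖v‖ := norm_pos_iff.2 hv0
  refine ⟨‖v‖⁻¹ • v, ?_, fun x hx => ?_⟩
  · rw [mem_sphere_zero_iff_norm, norm_smul, norm_inv, norm_norm, inv_mul_cancel₀ hn.ne']
  · have := mul_lt_mul_of_pos_left (hlt x hx) (inv_pos.2 hn)
    simp only [PiLp.smul_apply, smul_eq_mul]
    linarith

def normals (A B : Set E2) : Set E2 :=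
  {u | u ∈ Metric.sphere (0 : E2) 1 ∧ ∃ p ∈ B, ∀ x ∈ A,
    u 0 * x 0 + u 1 * x 1 ≤ u 0 * p 0 + u 1 * p 1}

lemma normals_compact (A B : Set E2) (hB : IsCompact B) : IsCompact (normals A B) := by
  have h : normals A B = Prod.fst '' ((Metric.sphere (0 : E2) 1 ×ˢ B) ∩
      {up : E2 × E2 | ∀ x ∈ A, up.1 0 * x 0 + up.1 1 * x 1 ≤ up.1 0 * up.2 0 + up.1 1 * up.2 1}) := by
    ext u
    constructor
    · rintro ⟨h1, p, hp, h2⟩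
      exact ⟨(u, p), ⟨⟨h1, hp⟩, h2⟩, rfl⟩
    · rintro ⟨⟨u, p⟩, ⟨⟨h1, hp⟩, h2⟩, rfl⟩
      exact ⟨h1, p, hp, h2⟩
  rw [h]
  refine IsCompact.image ?_ continuous_fst
  apply ((isCompact_sphere _ _).prod hB).inter_right
  have : {up : E2 × E2 | ∀ x ∈ A, up.1 0 * x 0 + up.1 1 * x 1 ≤ up.1 0 * up.2 0 + up.1 1 * up.2 1}
      = ⋂ x ∈ A, {up : E2 × E2 | up.1 0 * x 0 + up.1 1 * x 1 ≤ up.1 0 * up.2 0 + up.1 1 * up.2 1} := by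
    ext; simp
  rw [this]
  refine isClosed_biInter fun x _ => isClosed_le (by fun_prop) (by fun_prop)

lemma contact (A B : Set E2) (hA : IsCompact A) (hB : IsCompact B) (hBA : B ⊆ A)
    (hAv : Convex ℝ A) (hAn : A.Nonempty)
    (hmax : ∀ (x : E2) (s : ℝ), 1 < s → ¬ ({x} + s • B ⊆ A)) :
    (0 : E2) ∈ convexHull ℝ (normals A B) := by
  by_contra h0
  obtain ⟨f, δ, hδ, hf⟩ := geometric_hahn_banach_point_closed (convex_convexHull ℝ (normals A B))
    (hull_compact _ (normals_compact A B hB)).isClosed h0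
  obtain ⟨w, hw⟩ := functional f
  rw [map_zero] at hδ
  have hpos : ∀ u ∈ normals A B, 0 < w 0 * u 0 + w 1 * u 1 := by
    intro u hu
    rw [← hw]
    exact hδ.trans (hf u (subset_convexHull ℝ _ hu))
  let ε : ℕ → ℝ := fun n => 1 / ((n : ℝ) + 1)
  have hε0 : ∀ n, 0 < ε n := fun n => by positivity
  have hεt : Filter.Tendsto ε Filter.atTop (nhds 0) := tendsto_one_div_add_atTop_nhds_zero_nat
  have H : ∀ n, ∃ uk : E2 × E2, uk ∈ Metric.sphere (0 : E2) 1 ×ˢ B ∧ ∀ x ∈ A,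
      uk.1 0 * x 0 + uk.1 1 * x 1 < uk.1 0 * ((1 + ε n ^ 2) * uk.2 0 - ε n * w 0) +
        uk.1 1 * ((1 + ε n ^ 2) * uk.2 1 - ε n * w 1) := by
    intro n
    have := hmax (-(ε n • w)) (1 + ε n ^ 2) (by have := hε0 n; nlinarith)
    rw [not_subset] at this
    obtain ⟨y, hy, hyA⟩ := this
    rw [singleton_add] at hy
    obtain ⟨_, ⟨k, hk, rfl⟩, rfl⟩ := hy
    obtain ⟨u, hu, hlt⟩ := sep A hA hAv hAn _ hyA
    refine ⟨(u, k), ⟨hu, hk⟩, fun x hx => ?_⟩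
    have := hlt x hx
    simp only [PiLp.add_apply, PiLp.neg_apply, PiLp.smul_apply, smul_eq_mul] at this
    simp only
    linarith
  choose uk hmem hlt using H
  obtain ⟨⟨u, k⟩, hlim, φ, hφ, hconv⟩ := ((isCompact_sphere (0 : E2) 1).prod hB).tendsto_subseq hmem
  have hε' := hεt.comp hφ.tendsto_atTop
  have hcoord : ∀ i : Fin 2, Continuous (fun z : E2 => z i) := fun i => by fun_prop
  have hu : ∀ i : Fin 2, Filter.Tendsto (fun n => (uk (φ n)).1 i) Filter.atTop (nhds (u i)) :=
    fun i => (((hcoord i).comp continuous_fst).tendsto (u, k)).comp hconv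
  have hk : ∀ i : Fin 2, Filter.Tendsto (fun n => (uk (φ n)).2 i) Filter.atTop (nhds (k i)) :=
    fun i => (((hcoord i).comp continuous_snd).tendsto (u, k)).comp hconv
  have huN : u ∈ normals A B := by
    refine ⟨hlim.1, k, hlim.2, fun x hx => ?_⟩
    have l1 : Filter.Tendsto (fun n => (uk (φ n)).1 0 * x 0 + (uk (φ n)).1 1 * x 1) Filter.atTop
        (nhds (u 0 * x 0 + u 1 * x 1)) :=
      ((hu 0).mul_const _).add ((hu 1).mul_const _)
    have l2 := ((hu 0).mul ((((hε'.pow 2).const_add 1).mul (hk 0)).sub (hε'.mul_const (w 0)))).add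
      ((hu 1).mul ((((hε'.pow 2).const_add 1).mul (hk 1)).sub (hε'.mul_const (w 1))))
    have := le_of_tendsto_of_tendsto' l1 l2 (fun n => (hlt (φ n) x hx).le)
    simpa using this
  have hle : w 0 * u 0 + w 1 * u 1 ≤ 0 := by
    have l1 : Filter.Tendsto (fun n => w 0 * (uk (φ n)).1 0 + w 1 * (uk (φ n)).1 1) Filter.atTop
        (nhds (w 0 * u 0 + w 1 * u 1)) :=
      ((hu 0).const_mul _).add ((hu 1).const_mul _)
    have l2 := hε'.mul (((hu 0).mul (hk 0)).add ((hu 1).mul (hk 1)))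
    have := le_of_tendsto_of_tendsto' l1 l2 (fun n => by
      have h1 := hlt (φ n) _ (hBA (hmem (φ n)).2)
      have h2 := hε0 (φ n)
      have h3 : 0 < ε (φ n) * (ε (φ n) * ((uk (φ n)).1 0 * (uk (φ n)).2 0 +
        (uk (φ n)).1 1 * (uk (φ n)).2 1) - (w 0 * (uk (φ n)).1 0 + w 1 * (uk (φ n)).1 1)) := by
        nlinarith
      have h4 := (pos_iff_pos_of_mul_pos h3).1 h2
      simp only [Function.comp_apply]
      linarith)
    simpa using this
  linarith [hpos u huN]

lemma strip (u v : E2) (A B : Set E2) (hA : IsCompact A) (hB : IsCompact B)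
    (hBA : B ⊆ A) (hBv : Convex ℝ B) (hu : u ∈ normals A B) (hv : v ∈ normals A B)
    (h : v = -u) : 2 * volume A + 2 * volume B ≤ volume (A + B) := by
  obtain ⟨hus, p, hp, h1⟩ := hu
  obtain ⟨hvs, q, hq, h2⟩ := hv
  rw [sphere_iff] at hus
  subst h
  simp only [PiLp.neg_apply] at h2
  refine slice' (u 0) (u 1) (by rw [hus]; norm_num) A B hA hB hBA hBv q p hq hp ?_ h1
  intro x hx
  linarith [h2 x hx]

/-- parallel unit vectors -/
lemma par (u v : E2) (hu : u 0 ^ 2 + u 1 ^ 2 = 1) (hv : v 0 ^ 2 + v 1 ^ 2 = 1)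
    (h : u 0 * v 1 - u 1 * v 0 = 0) : v = u ∨ v = -u := by
  have h1 : (u 0 * v 0 + u 1 * v 1) ^ 2 = 1 := by
    have : (u 0 * v 0 + u 1 * v 1) ^ 2 + (u 0 * v 1 - u 1 * v 0) ^ 2 =
      (u 0 ^ 2 + u 1 ^ 2) * (v 0 ^ 2 + v 1 ^ 2) := by ring
    rw [h, hu, hv] at this; linarith
  rcases sq_eq_sq_iff_eq_or_eq_neg.1 (h1.trans (one_pow 2).symm) with h2 | h2
  · left
    have e : (v 0 - u 0) ^ 2 + (v 1 - u 1) ^ 2 = 0 := by nlinarith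
    have e0 : v 0 - u 0 = 0 := by nlinarith
    have e1 : v 1 - u 1 = 0 := by nlinarith
    ext i; fin_cases i
    · simp; linarith
    · simp; linarith
  · right
    have e : (v 0 + u 0) ^ 2 + (v 1 + u 1) ^ 2 = 0 := by nlinarith
    have e0 : v 0 + u 0 = 0 := by nlinarith
    have e1 : v 1 + u 1 = 0 := by nlinarith
    ext i; fin_cases i
    · simp; linarith
    · simp; linarith

/-- three unit vectors, two parallel, with a convex combination zero: an opposite pair -/
lemma opp (u v w : E2) (hu : u 0 ^ 2 + u 1 ^ 2 = 1) (hv : v 0 ^ 2 + v 1 ^ 2 = 1)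
    (hw : w 0 ^ 2 + w 1 ^ 2 = 1) (a b c : ℝ) (ha : 0 ≤ a) (hb : 0 ≤ b) (hc : 0 ≤ c)
    (hs : a + b + c = 1) (h0 : a * u 0 + b * v 0 + c * w 0 = 0)
    (h1 : a * u 1 + b * v 1 + c * w 1 = 0) (h : u 0 * v 1 - u 1 * v 0 = 0) :
    v = -u ∨ w = -u := by
  rcases par u v hu hv h with rfl | h
  · right
    have e0 : (a + b) * v 0 = - c * w 0 := by linarith
    have e1 : (a + b) * v 1 = - c * w 1 := by linarith
    have : (a + b) ^ 2 * (v 0 ^ 2 + v 1 ^ 2) = c ^ 2 * (w 0 ^ 2 + w 1 ^ 2) := by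
      linear_combination ((a + b) * v 0 - c * w 0) * e0 + ((a + b) * v 1 - c * w 1) * e1
    rw [hu, hw] at this
    have hc2 : a + b = c := by nlinarith
    have hc3 : c = 1 / 2 := by linarith
    rw [hc2, hc3] at e0 e1
    ext i; fin_cases i
    · simp; linarith
    · simp; linarith
  · exact Or.inl h

lemma main (A B : Set E2) (hA : IsCompact A) (hB : IsCompact B) (hBA : B ⊆ A)
    (hAv : Convex ℝ A) (hBv : Convex ℝ B) (hAn : A.Nonempty)
    (hmax : ∀ (x : E2) (s : ℝ), 1 < s → ¬ ({x} + s • B ⊆ A)) :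
    2 * volume A + 2 * volume B ≤ volume (A + B) := by
  obtain ⟨m, z, ⟨hm0, hm1⟩, hz, hsum⟩ := hull_three _ (contact A B hA hB hBA hAv hAn hmax)
  rw [Fin.sum_univ_three] at hm1 hsum
  have e0 : m 0 * z 0 0 + m 1 * z 1 0 + m 2 * z 2 0 = 0 := by
    simpa using congrArg (fun x : E2 => x 0) hsum
  have e1 : m 0 * z 0 1 + m 1 * z 1 1 + m 2 * z 2 1 = 0 := by
    simpa using congrArg (fun x : E2 => x 1) hsum
  have a0 := hm0 0
  have b0 := hm0 1
  have c0 := hm0 2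
  have hu := hz 0
  have hv := hz 1
  have hw := hz 2
  generalize m 0 = a at *
  generalize m 1 = b at *
  generalize m 2 = c at *
  generalize z 0 = u at *
  generalize z 1 = v at *
  generalize z 2 = w at *
  have nu := (sphere_iff u).1 hu.1
  have nv := (sphere_iff v).1 hv.1
  have nw := (sphere_iff w).1 hw.1
  by_cases huv : u 0 * v 1 - u 1 * v 0 = 0
  · rcases opp u v w nu nv nw a b c a0 b0 c0 hm1 e0 e1 huv with h | h
    · exact strip u v A B hA hB hBA hBv hu hv h
    · exact strip u w A B hA hB hBA hBv hu hw h
  by_cases hvw : v 0 * w 1 - v 1 * w 0 = 0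
  · rcases opp v w u nv nw nu b c a b0 c0 a0 (by linarith) (by linarith) (by linarith) hvw with h | h
    · exact strip v w A B hA hB hBA hBv hv hw h
    · exact strip v u A B hA hB hBA hBv hv hu h
  by_cases hwu : w 0 * u 1 - w 1 * u 0 = 0
  · rcases opp w u v nw nu nv c a b c0 a0 b0 (by linarith) (by linarith) (by linarith) hwu with h | h
    · exact strip w u A B hA hB hBA hBv hw hu h
    · exact strip w v A B hA hB hBA hBv hw hv h
  have r1 : a * (u 0 * v 1 - u 1 * v 0) = c * (v 0 * w 1 - v 1 * w 0) := by
    linear_combination v 1 * e0 - v 0 * e1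
  have r2 : b * (v 0 * w 1 - v 1 * w 0) = a * (w 0 * u 1 - w 1 * u 0) := by
    linear_combination w 1 * e0 - w 0 * e1
  have apos : 0 < a := by
    rcases a0.lt_or_eq with h | h
    · exact h
    · rw [← h, zero_mul] at r1 r2
      have h1 := (mul_eq_zero.1 r1.symm).resolve_right hvw
      have h2 := (mul_eq_zero.1 r2).resolve_right hvw
      linarith
  have cpos : 0 < c := by
    rcases c0.lt_or_eq with h | h
    · exact h
    · rw [← h, zero_mul] at r1
      exact absurd ((mul_eq_zero.1 r1).resolve_right huv) apos.ne'
  have bpos : 0 < b := by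
    rcases b0.lt_or_eq with h | h
    · exact h
    · rw [← h, zero_mul] at r2
      exact absurd ((mul_eq_zero.1 r2.symm).resolve_right hwu) apos.ne'
  obtain ⟨-, p, hp, hup⟩ := hu
  obtain ⟨-, q, hq, hvq⟩ := hv
  obtain ⟨-, r, hr, hwr⟩ := hw
  rcases lt_or_gt_of_ne huv with h | h
  · have h' : v 0 * w 1 - v 1 * w 0 < 0 := by
      by_contra hn
      have := mul_nonneg cpos.le (not_lt.1 hn)
      have := mul_neg_of_pos_of_neg apos h
      linarith
    have h'' : w 0 * u 1 - w 1 * u 0 < 0 := by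
      by_contra hn
      have := mul_nonneg apos.le (not_lt.1 hn)
      have := mul_neg_of_pos_of_neg bpos h'
      linarith
    exact tri u w v p r q A B hA hB hBA hBv hp hr hq (by linarith) (by linarith) (by linarith)
      hup hwr hvq
  · have h' : 0 < v 0 * w 1 - v 1 * w 0 := by
      have := mul_pos apos h
      rw [r1] at this
      exact (pos_iff_pos_of_mul_pos this).1 cpos
    have h'' : 0 < w 0 * u 1 - w 1 * u 0 := by
      have := mul_pos bpos h'
      rw [r2] at this
      exact (pos_iff_pos_of_mul_pos this).1 apos
    exact tri u v w p q r A B hA hB hBA hBv hp hq hr h h' h'' hup hvq hwr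

lemma exists_max (A B : Set E2) (hA : IsCompact A) (hB : IsCompact B)
    (hAi : (interior A).Nonempty) (hBi : (interior B).Nonempty) :
    ∃ r : ℝ, 0 < r ∧ (∃ x : E2, {x} + r • B ⊆ A) ∧
      ∀ (x : E2) (s : ℝ), 0 ≤ s → {x} + s • B ⊆ A → s ≤ r := by
  have hmemiff : ∀ (x : E2) (s : ℝ), {x} + s • B ⊆ A ↔ ∀ k ∈ B, x + s • k ∈ A := by
    intro x s
    rw [singleton_add]
    constructor
    · intro h k hk; exact h ⟨_, ⟨k, hk, rfl⟩, rfl⟩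
    · rintro h _ ⟨_, ⟨k, hk, rfl⟩, rfl⟩; exact h k hk
  -- a small positive element
  obtain ⟨a0, ha0⟩ := hAi
  obtain ⟨ρ, hρ, hball⟩ := Metric.isOpen_iff.1 isOpen_interior a0 ha0
  obtain ⟨M, hM⟩ := hB.isBounded.exists_norm_le
  obtain ⟨b0, hb0⟩ := hBi
  have hb0B := interior_subset hb0
  have hM0 : 0 ≤ M := (norm_nonneg _).trans (hM b0 hb0B)
  have hsmall : {a0} + (ρ / (2 * (M + 1))) • B ⊆ A := by
    rw [hmemiff]
    intro k hk
    apply interior_subset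
    apply hball
    rw [Metric.mem_ball, dist_eq_norm, add_sub_cancel_left, norm_smul, Real.norm_of_nonneg (by positivity)]
    have := hM k hk
    rw [div_mul_eq_mul_div, div_lt_iff₀ (by positivity)]
    nlinarith
  have hspos : 0 < ρ / (2 * (M + 1)) := by positivity
  -- another point of B
  obtain ⟨σ, hσ, hballB⟩ := Metric.isOpen_iff.1 isOpen_interior b0 hb0
  let b1 : E2 := b0 + !₂[σ / 2, 0]
  have hb1B : b1 ∈ B := by
    apply interior_subset
    apply hballB
    rw [Metric.mem_ball, dist_eq_norm, add_sub_cancel_left, EuclideanSpace.norm_eq]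
    simp only [Fin.sum_univ_two]
    simp only [PiLp.toLp_apply, Matrix.cons_val_zero, Matrix.cons_val_one, norm_zero, Real.norm_eq_abs, sq_abs]
    rw [zero_pow two_ne_zero, add_zero, Real.sqrt_sq (by positivity)]
    linarith
  obtain ⟨MA, hMA⟩ := hA.isBounded.exists_norm_le
  have hbd : ∀ (x : E2) (s : ℝ), 0 ≤ s → {x} + s • B ⊆ A → s ≤ 4 * MA / σ := by
    intro x s hs h
    rw [hmemiff] at h
    have h0 := hMA _ (h b0 hb0B)
    have h1 := hMA _ (h b1 hb1B)
    have h2 : (x + s • b1) - (x + s • b0) = !₂[s * (σ / 2), 0] := by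
      ext i; fin_cases i <;> simp [b1] <;> ring
    have h3 : ‖(x + s • b1) - (x + s • b0)‖ = s * (σ / 2) := by
      rw [h2, EuclideanSpace.norm_eq]
      simp only [Fin.sum_univ_two]
      simp only [PiLp.toLp_apply, Matrix.cons_val_zero, Matrix.cons_val_one, norm_zero, Real.norm_eq_abs, sq_abs]
      rw [zero_pow two_ne_zero, add_zero, Real.sqrt_sq (by positivity)]
    have h4 := norm_sub_le (x + s • b1) (x + s • b0)
    rw [le_div_iff₀ hσ]
    nlinarith
  -- the compact feasible set
  let F : Set (E2 × ℝ) := {xs | 0 ≤ xs.2 ∧ ∀ k ∈ B, xs.1 + xs.2 • k ∈ A}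
  have hFc : IsClosed F := by
    have : F = {xs | 0 ≤ xs.2} ∩ ⋂ k ∈ B, (fun xs : E2 × ℝ => xs.1 + xs.2 • k) ⁻¹' A := by
      ext; simp [F]
    rw [this]
    refine (isClosed_le continuous_const continuous_snd).inter
      (isClosed_biInter fun k _ => hA.isClosed.preimage (by fun_prop))
  have hFcomp : IsCompact F := by
    let T := Icc (0 : ℝ) (4 * MA / σ)
    have hc : IsCompact ((fun as : E2 × ℝ => (as.1 - as.2 • b0, as.2)) '' (A ×ˢ T)) :=
      (hA.prod isCompact_Icc).image (by fun_prop)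
    refine hc.of_isClosed_subset hFc ?_
    rintro ⟨x, s⟩ ⟨hs, h⟩
    exact ⟨(x + s • b0, s), ⟨h b0 hb0B, hs, hbd x s hs ((hmemiff _ _).2 h)⟩, by simp⟩
  obtain ⟨⟨x, r⟩, hxr, hmaxr⟩ := hFcomp.exists_isMaxOn
    ⟨(a0, ρ / (2 * (M + 1))), hspos.le, (hmemiff _ _).1 hsmall⟩ continuous_snd.continuousOn
  have hge : ∀ (x : E2) (s : ℝ), 0 ≤ s → {x} + s • B ⊆ A → s ≤ r := fun y s hs h =>
    hmaxr (show (y, s) ∈ F from ⟨hs, (hmemiff _ _).1 h⟩)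
  exact ⟨r, hspos.trans_le (hge _ _ hspos.le hsmall), ⟨x, (hmemiff _ _).2 hxr.2⟩, hge⟩

/-- the key inequality at the relative inradius -/
lemma key (A B : Set E2) (hA : IsCompact A) (hB : IsCompact B)
    (hAv : Convex ℝ A) (hBv : Convex ℝ B)
    (hAi : (interior A).Nonempty) (r : ℝ) (hr : 0 < r) (x : E2)
    (hx : {x} + r • B ⊆ A)
    (hge : ∀ (x : E2) (s : ℝ), 0 ≤ s → {x} + s • B ⊆ A → s ≤ r) :
    2 * (volume A).toReal + 2 * (r ^ 2 * (volume B).toReal) ≤ (volume (A + r • B)).toReal := by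
  have hrB : IsCompact (r • B) := hB.smul r
  have hm := main A ({x} + r • B) hA (isCompact_singleton.add hrB) hx hAv
    ((convex_singleton x).add (hBv.smul r)) (hAi.mono interior_subset) (by
      intro y s hs h
      have : {y + s • x} + (s * r) • B ⊆ A := by
        refine Subset.trans (le_of_eq ?_) h
        rw [smul_add, smul_set_singleton, smul_smul, ← add_assoc, singleton_add_singleton]
      have := hge _ _ (by positivity) this
      nlinarith)
  have e1 : volume ({x} + r • B) = volume (r • B) := by
    rw [singleton_add]
    exact measure_vadd volume x (r • B)
  have e2 : volume (A + ({x} + r • B)) = volume (A + r • B) := by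
    rw [add_left_comm, singleton_add]
    exact measure_vadd volume x (A + r • B)
  have e3 : (volume (r • B)).toReal = r ^ 2 * (volume B).toReal := by
    rw [Measure.addHaar_smul]
    simp [finrank_euclideanSpace, sq_nonneg]
  rw [e1, e2] at hm
  have h1 : volume A ≠ ⊤ := hA.measure_lt_top.ne
  have h2 : volume (r • B) ≠ ⊤ := hrB.measure_lt_top.ne
  have h3 : volume (A + r • B) ≠ ⊤ := (hA.add hrB).measure_lt_top.ne
  have := ENNReal.toReal_mono h3 hm
  rw [ENNReal.toReal_add (ENNReal.mul_ne_top (by simp) h1) (ENNReal.mul_ne_top (by simp) h2),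
    ENNReal.toReal_mul, ENNReal.toReal_mul, e3] at this
  simpa using this

end BB

/-- Blaschke's extension of the Bonnesen inequality.  `r` and `R` are the
inradius and circumradius of `L` relative to `K`, and `V` is the mixed area, characterized
by `vol(L + sK) = vol L + 2s·V + s²·vol K` for `s ≥ 0`. -/
theorem blaschke_bonnesen (K L : Set (EuclideanSpace ℝ (Fin 2)))
    (hKc : IsCompact K) (hKv : Convex ℝ K) (hKint : (interior K).Nonempty)
    (hLc : IsCompact L) (hLv : Convex ℝ L) (hLint : (interior L).Nonempty)
    (V : ℝ)
    (hV : ∀ s : ℝ, 0 ≤ s →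
      (volume (L + s • K)).toReal
        = (volume L).toReal + 2 * s * V + s ^ 2 * (volume K).toReal)
    (t : ℝ)
    (ht : t ∈ Icc (sSup {t : ℝ | 0 ≤ t ∧ ∃ x, {x} + t • K ⊆ L})
                  (sInf {t : ℝ | 0 ≤ t ∧ ∃ x, L ⊆ {x} + t • K})) :
    (volume L).toReal - 2 * t * V + t ^ 2 * (volume K).toReal ≤ 0 := by
  obtain ⟨r, hr, ⟨x, hx⟩, hge⟩ := BB.exists_max L K hLc hKc hLint hKint
  obtain ⟨s, hs, ⟨y, hy⟩, hge'⟩ := BB.exists_max K L hKc hLc hKint hLint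
  have h1 := BB.key L K hLc hKc hLv hKv hLint r hr x hx hge
  have h2 := BB.key K L hKc hLc hKv hLv hKint s hs y hy hge'
  rw [hV r hr.le] at h1
  have e : K + s • L = s • (L + s⁻¹ • K) := by
    rw [smul_add, smul_smul, mul_inv_cancel₀ hs.ne', one_smul, add_comm]
  have e' : (volume (K + s • L)).toReal = s ^ 2 * (volume (L + s⁻¹ • K)).toReal := by
    rw [e, Measure.addHaar_smul]
    simp [finrank_euclideanSpace, sq_nonneg]
  rw [e', hV s⁻¹ (by positivity)] at h2
  have hrt : r ≤ t := by
    refine (le_csSup ⟨r, ?_⟩ ?_).trans ht.1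
    · rintro s' ⟨hs', z, hz⟩
      exact hge z s' hs' hz
    · exact ⟨hr.le, x, hx⟩
  have hts : t ≤ s⁻¹ := by
    refine ht.2.trans (csInf_le ⟨0, fun _ h => h.1⟩ ⟨by positivity, -(s⁻¹ • y), ?_⟩)
    intro l hl
    have : y + s • l ∈ K := hy (by
      rw [singleton_add]; exact ⟨_, ⟨l, hl, rfl⟩, rfl⟩)
    rw [singleton_add]
    refine ⟨_, ⟨_, this, rfl⟩, ?_⟩
    simp [smul_smul, inv_mul_cancel₀ hs.ne']
  generalize (volume L).toReal = l at *
  have hk0 : 0 ≤ (volume K).toReal := ENNReal.toReal_nonneg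
  generalize (volume K).toReal = k at *
  have hq1 : l - 2 * r * V + r ^ 2 * k ≤ 0 := by linarith
  have hq2 : l - 2 * s⁻¹ * V + s⁻¹ ^ 2 * k ≤ 0 := by
    have h3 : s ^ 2 * (l - 2 * s⁻¹ * V + s⁻¹ ^ 2 * k) ≤ 0 := by
      have : s * s⁻¹ = 1 := mul_inv_cancel₀ hs.ne'
      have e5 : s ^ 2 * (s⁻¹ ^ 2 * k) = k := by
        rw [← mul_assoc, ← mul_pow, this]; ring
      nlinarith
    by_contra hn
    have := mul_pos (pow_pos hs 2) (not_le.1 hn)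
    linarith
  generalize s⁻¹ = R at *
  rcases hrt.eq_or_lt with rfl | hlt
  · exact hq1
  · have hRr : 0 < R - r := by linarith
    have h3 := mul_nonneg (mul_nonneg (sub_nonneg.2 hrt) (sub_nonneg.2 hts)) hk0
    have m1 := mul_le_mul_of_nonneg_left hq1 (sub_nonneg.2 hts)
    have m2 := mul_le_mul_of_nonneg_left hq2 (sub_nonneg.2 hrt)
    have m3 := mul_nonneg hRr.le h3
    have : (R - r) * (l - 2 * t * V + t ^ 2 * k) ≤ 0 := by nlinarith
    by_contra hn
    have := mul_pos hRr (not_le.1 hn)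
    linarith
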